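/- Let m \ge 1 and t \ge 2 be integers and C > 0 a real number such that k := t + (C \log m / \log t) t is an integer. If additionally t \ge m^{10C}, then k! \le t! \cdot (1.1)^k \cdot m^{Ct}. -/

import Mathlib

open Real

/-!
Put `d = k - t`, so that `t ^ d = m ^ (C * t)`. Each of the `d` factors of `k! / t!` is at most `k`,
and the lower bound `m ^ (10 * C) ≤ t` says exactly that `k ≤ 1.1 * t`. Hence
`k! / t! ≤ (1.1 * t) ^ d = 1.1 ^ d * m ^ (C * t)`.
-/

open scoped Nat

theorem factorial_le_factorial_mul_pow_sub {R : Type*} [Semiring R] [PartialOrder R]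
    [IsOrderedRing R] {t k : ℕ} {b : R} (htk : t ≤ k) (hkb : (k : R) ≤ b) :
    (k ! : R) ≤ t ! * b ^ (k - t) := by
  have hnat : k ! ≤ t ! * k ^ (k - t) := by
    obtain ⟨d, rfl⟩ := Nat.exists_eq_add_of_le htk
    rw [Nat.add_sub_cancel_left, ← Nat.factorial_mul_ascFactorial]
    gcongr
    exact Nat.ascFactorial_le_pow_add t d
  calc (k ! : R) ≤ t ! * (k : R) ^ (k - t) := mod_cast Nat.mono_cast (α := R) hnat
    _ ≤ t ! * b ^ (k - t) := by gcongr

section Logarithm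

variable {b x C : ℝ}

theorem mul_log_div_log_eq_logb_rpow (hx : 0 < x) : C * log x / log b = logb b (x ^ C) := by
  rw [logb, log_rpow hx]

theorem rpow_mul_log_div_log_mul (hb : 1 < b) (hx : 0 < x) (s : ℝ) :
    b ^ (C * log x / log b * s) = x ^ (C * s) := by
  have hb₀ : 0 < b := one_pos.trans hb
  rw [mul_log_div_log_eq_logb_rpow hx, rpow_mul hb₀.le,
    rpow_logb hb₀ hb.ne' (rpow_pos_of_pos hx C), rpow_mul hx.le]

theorem mul_log_div_log_le_inv {r : ℝ} (hb : 1 < b) (hx : 0 < x) (hr : 0 < r)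
    (h : x ^ (r * C) ≤ b) : C * log x / log b ≤ r⁻¹ := by
  have hxC : 0 < x ^ C := rpow_pos_of_pos hx C
  rw [mul_log_div_log_eq_logb_rpow hx, logb_le_iff_le_rpow hb hxC,
    le_rpow_inv_iff_of_pos hxC.le (one_pos.trans hb).le hr, ← rpow_mul hx.le, mul_comm]
  exact h

end Logarithm

theorem stmt_9_general {t k : ℕ} {m C r : ℝ} (hm : 1 ≤ m) (ht : 1 < t) (hC : 0 ≤ C) (hr : 0 < r)
    (hk : (k : ℝ) = t + (C * log m / log t) * t) (htm : m ^ (r * C) ≤ t) :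
    (k ! : ℝ) ≤ t ! * (1 + r⁻¹) ^ (k - t) * m ^ (C * t) := by
  have hm₀ : 0 < m := one_pos.trans_le hm
  have ht₁ : (1 : ℝ) < t := mod_cast ht
  have hx₀ : 0 ≤ C * log m / log t :=
    div_nonneg (mul_nonneg hC (log_nonneg hm)) (log_pos ht₁).le
  have hx : C * log m / log t ≤ r⁻¹ := mul_log_div_log_le_inv ht₁ hm₀ hr htm
  have htk : t ≤ k := by
    rw [← Nat.cast_le (α := ℝ), hk]
    exact le_add_of_nonneg_right (by positivity)
  have hk_le : (k : ℝ) ≤ (1 + r⁻¹) * t := by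
    rw [hk, one_add_mul]
    gcongr
  have hpow : (t : ℝ) ^ (k - t) = m ^ (C * t) := by
    rw [← rpow_mul_log_div_log_mul ht₁ hm₀, ← rpow_natCast, Nat.cast_sub htk, hk,
      add_sub_cancel_left]
  calc (k ! : ℝ) ≤ t ! * ((1 + r⁻¹) * t) ^ (k - t) :=
        factorial_le_factorial_mul_pow_sub htk hk_le
    _ = t ! * (1 + r⁻¹) ^ (k - t) * m ^ (C * t) := by rw [mul_pow, hpow, mul_assoc]

theorem stmt_9 (m t k : ℕ) (C : ℝ) (hm : 1 ≤ m) (ht : 2 ≤ t) (hC : 0 < C)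
    (hk : (k : ℝ) = t + (C * Real.log m / Real.log t) * t)
    (htm : (m : ℝ) ^ (10 * C) ≤ t) :
    (k.factorial : ℝ) ≤ (t.factorial : ℝ) * (1.1 : ℝ) ^ k * (m : ℝ) ^ (C * t) := by
  refine (stmt_9_general (mod_cast hm) ht hC.le (by norm_num) hk htm).trans ?_
  gcongr ?_ * ?_ * _
  exact (pow_le_pow_right₀ (by norm_num) (k.sub_le t)).trans_eq (by norm_num)
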